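/- Let h ≥ 1 be an integer, let δ be a real number with 0 < δ ≤ 1/(4(h+1)(1+1/(2h))²), and set ε = δ/4. Let n be a prime number, set N = n^{h+1}, and let Q = max(2h²−h, Q₀) where Q₀ is the least integer such that binom(Q₀,h) ≥ δn; assume n > h + 1 + Q. Then there exists an ORN design on N nodes that guarantees throughput 1/(2(h+1−ε)) and has maximum latency at most (n−1)(3+2h+2Q) − 1. -/

import Mathlib

open scoped ENNReal

/-- A connection schedule of size `N` and period `T`: a `T`-periodic sequence of
permutations of `[N]`, indexed by timeslots `t : ℤ`. -/
structure ConnSched (N T : ℕ) where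
  Tpos : 0 < T
  perm : ℤ → Equiv.Perm (Fin N)
  periodic : ∀ t : ℤ, perm (t + T) = perm t

/-- A path in the virtual topology, encoded by its starting vertex together with the
list of its steps, where `true` denotes traversing the (unique) outgoing physical edge
and `false` denotes traversing the virtual edge. -/
structure ORNPath (N : ℕ) where
  start : Fin N × ℤ
  steps : List Bool

namespace ORNPath

variable {N T : ℕ}

/-- One step in the virtual topology: from vertex `v`, either follow the physical edge
(`b = true`) to `(π_t v.1, v.2 + 1)`, or the virtual edge (`b = false`) to `(v.1, v.2+1)`. -/
def stepFn (S : ConnSched N T) (v : Fin N × ℤ) (b : Bool) : Fin N × ℤ :=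
  (if b then S.perm v.2 v.1 else v.1, v.2 + 1)

/-- The final vertex of a path. -/
def dest (S : ConnSched N T) (P : ORNPath N) : Fin N × ℤ :=
  P.steps.foldl (stepFn S) P.start

/-- The latency of a path: the total number of (virtual or physical) edges it contains. -/
def latency (P : ORNPath N) : ℕ := P.steps.length

/-- The number of physical edges of a path. -/
def hops (P : ORNPath N) : ℕ := P.steps.count true

/-- The vertex of a path after `k` steps. -/
def vertexAt (S : ConnSched N T) (P : ORNPath N) (k : ℕ) : Fin N × ℤ :=
  (P.steps.take k).foldl (stepFn S) P.start

/-- A physical edge of the virtual topology is identified by the pair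
(sending node, timeslot); the receiving node is determined by the schedule.
`P.usesEdge S e` says that path `P` traverses the physical edge `e`. -/
def usesEdge (S : ConnSched N T) (P : ORNPath N) (e : Fin N × ℤ) : Prop :=
  ∃ k : Fin P.steps.length, P.steps.get k = true ∧ P.vertexAt S k.val = e

/-- Transpose a path by `s` timeslots. -/
def shift (P : ORNPath N) (s : ℤ) : ORNPath N :=
  ⟨(P.start.1, P.start.2 + s), P.steps⟩

end ORNPath

/-- The amount of flow that `f` sends across the physical edge `e`. -/
noncomputable def edgeFlow {N T : ℕ} (S : ConnSched N T) (f : ORNPath N → ℝ≥0∞)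
    (e : Fin N × ℤ) : ℝ≥0∞ :=
  ∑' P : {P : ORNPath N // P.usesEdge S e}, f P.val

/-- A flow is feasible if it places at most one unit of flow on every physical edge. -/
def Feasible {N T : ℕ} (S : ConnSched N T) (f : ORNPath N → ℝ≥0∞) : Prop :=
  ∀ e : Fin N × ℤ, edgeFlow S f e ≤ 1

/-- An ORN design: a connection schedule together with an oblivious routing scheme.
`route a b t` is a unit flow supported on paths from `(a,t)` to the timeline of `b`,
periodic with period `T`. -/
structure ORNDesign (N T : ℕ) where
  sched : ConnSched N T
  route : Fin N → Fin N → ℤ → ORNPath N → ℝ≥0∞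
  route_support : ∀ a b t P, route a b t P ≠ 0 →
    P.start = (a, t) ∧ (P.dest sched).1 = b
  route_unit : ∀ a b t, ∑' P : ORNPath N, route a b t P = 1
  route_periodic : ∀ a b t P, route a b (t + T) (P.shift T) = route a b t P

/-- A demand function `D` (assigning to each timeslot an `N × N` matrix of nonnegative
reals) requests throughput `r` if all row and column sums of every `D t` are at most `r`. -/
def RequestsThroughput {N : ℕ} (D : ℤ → Fin N → Fin N → ℝ) (r : ℝ) : Prop :=
  (∀ t a b, 0 ≤ D t a b) ∧ (∀ t a, ∑ b, D t a b ≤ r) ∧ (∀ t b, ∑ a, D t a b ≤ r)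

/-- The flow induced by routing the demand `D` with the routing scheme of `R`. -/
noncomputable def inducedFlow {N T : ℕ} (R : ORNDesign N T)
    (D : ℤ → Fin N → Fin N → ℝ) (P : ORNPath N) : ℝ≥0∞ :=
  ∑' x : Fin N × Fin N × ℤ,
    ENNReal.ofReal (D x.2.2 x.1 x.2.1) * R.route x.1 x.2.1 x.2.2 P

/-- An ORN design guarantees throughput `r` if the induced flow is feasible for every
demand function requesting throughput at most `r`. -/
def GuaranteesThroughput {N T : ℕ} (R : ORNDesign N T) (r : ℝ) : Prop :=
  ∀ D : ℤ → Fin N → Fin N → ℝ, RequestsThroughput D r →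
    Feasible R.sched (inducedFlow R D)

/-- The maximum latency of the ORN design `R` is at most `L`: every path carrying a
positive amount of flow has latency at most `L`. -/
def MaxLatencyLE {N T : ℕ} (R : ORNDesign N T) (L : ℕ) : Prop :=
  ∀ a b t P, R.route a b t P ≠ 0 → P.latency ≤ L

/-!
Label the nodes by the vectors of `V = F ^ (h + 1)`, where `F` is the field with `n` elements and
`u` generates `Fˣ`, and divide time into phases of `n - 1` slots. Phase `q` translates the labels by
all nonzero multiples of the Vandermonde vector `(1, x, …, x ^ h)` with `x = u ^ q`. A message whose
label must change by `c` expands `c` in the directions of `K` consecutive phases and makes one hop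
for each nonzero coefficient.

Any `h + 1` of these `K` directions form a basis, so `h + 1` hops always suffice. One hop is saved
when `c` lies on one of the `C = binom(K, h)` hyperplanes spanned by `h` directions. Two distinct
hyperplanes share exactly `|V| / n ^ 2` vectors, so by Cauchy–Schwarz they cover at least a fraction
`C / (n + C)` of `V`.

Valiant load balancing makes worst-case demand behave like this average over `c`: a message goes
through a uniformly random intermediate node, and since the twist taking each direction to the next
is linear, every phase sees the same distribution of expansions. Scaling expansions by a random
element of `Fˣ` spreads the hops of a phase evenly over its slots.
-/

/-! ### Covering a finite space by hyperplanes -/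

section Hyperplanes

open Finset Module

variable {F V ι : Type*} [Field F] [AddCommGroup V] [Module F V]

lemma isCoatom_iff_finrank_add_one [FiniteDimensional F V] {W : Submodule F V} :
    IsCoatom W ↔ finrank F W + 1 = finrank F V := by
  rw [← isSimpleModule_iff_isCoatom, isSimpleModule_iff_finrank_eq_one,
    ← W.finrank_quotient_add_finrank, add_comm, Nat.add_right_cancel_iff, eq_comm]

lemma natCard_mul_natCard_of_isCoatom [FiniteDimensional F V] {W : Submodule F V}
    (hW : IsCoatom W) :
    Nat.card F * Nat.card W = Nat.card V := by
  rw [natCard_eq_pow_finrank (K := F) (V := W), natCard_eq_pow_finrank (K := F) (V := V),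
    ← isCoatom_iff_finrank_add_one.1 hW, pow_succ']

lemma natCard_sq_mul_natCard_inf [FiniteDimensional F V] {W W' : Submodule F V}
    (hW : IsCoatom W) (hW' : IsCoatom W') (hne : W ≠ W') :
    Nat.card F ^ 2 * Nat.card (W ⊓ W' : Submodule F V) = Nat.card V := by
  have hdim := Submodule.finrank_sup_add_finrank_inf_eq W W'
  rw [hW.sup_eq_top_of_ne hW' hne, finrank_top] at hdim
  have h1 := isCoatom_iff_finrank_add_one.1 hW
  have h2 := isCoatom_iff_finrank_add_one.1 hW'
  rw [natCard_eq_pow_finrank (K := F) (V := (W ⊓ W' : Submodule F V)),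
    natCard_eq_pow_finrank (K := F) (V := V), ← pow_add]
  congr 1
  omega

section Counting

variable [Fintype V] {A : Finset (Submodule F V)}

open scoped Classical in
lemma natCard_mul_sum_card_hyperplanes (hA : ∀ W ∈ A, IsCoatom W) :
    Nat.card F * ∑ c : V, #{W ∈ A | c ∈ W} = #A * Nat.card V := by
  have hswap := sum_card_bipartiteAbove_eq_sum_card_bipartiteBelow (s := univ) (t := A)
    fun (c : V) W => c ∈ W
  simp only [bipartiteAbove, bipartiteBelow] at hswap
  rw [hswap, mul_sum, card_eq_sum_ones, sum_mul]
  refine sum_congr rfl fun W hW => ?_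
  rw [one_mul, ← natCard_mul_natCard_of_isCoatom (hA W hW), ← Fintype.card_subtype,
    Nat.card_eq_fintype_card (α := W)]

open scoped Classical in
lemma natCard_sq_mul_sum_card_hyperplanes_sq_le (hA : ∀ W ∈ A, IsCoatom W) :
    Nat.card F ^ 2 * ∑ c : V, #{W ∈ A | c ∈ W} ^ 2 ≤
      #A * Nat.card V * (Nat.card F + #A) := by
  have hpair (W) (hW : W ∈ A) (W') (hW' : W' ∈ A) :
      Nat.card F ^ 2 * Nat.card (W ⊓ W' : Submodule F V) ≤
        Nat.card V * ((if W = W' then Nat.card F else 0) + 1) := by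
    split_ifs with heq
    · subst heq
      rw [inf_idem, sq, mul_assoc, natCard_mul_natCard_of_isCoatom (hA W hW), mul_comm]
      gcongr
      omega
    · rw [natCard_sq_mul_natCard_inf (hA W hW) (hA W' hW') heq, zero_add, mul_one]
  have hsq (c : V) : #{W ∈ A | c ∈ W} ^ 2 = #{p ∈ A ×ˢ A | c ∈ p.1 ⊓ p.2} := by
    simp only [sq, ← card_product, ← filter_product, Submodule.mem_inf]
  have hswap := sum_card_bipartiteAbove_eq_sum_card_bipartiteBelow (s := univ) (t := A ×ˢ A)
    fun (c : V) p => c ∈ p.1 ⊓ p.2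
  simp only [bipartiteAbove, bipartiteBelow] at hswap
  calc Nat.card F ^ 2 * ∑ c : V, #{W ∈ A | c ∈ W} ^ 2
      = ∑ W ∈ A, ∑ W' ∈ A, Nat.card F ^ 2 * Nat.card (W ⊓ W' : Submodule F V) := by
        simp_rw [hsq]
        rw [hswap, mul_sum, sum_product]
        simp_rw [← Fintype.card_subtype, Nat.card_eq_fintype_card]
    _ ≤ ∑ W ∈ A, ∑ W' ∈ A, Nat.card V * ((if W = W' then Nat.card F else 0) + 1) :=
        sum_le_sum fun W hW => sum_le_sum fun W' hW' => hpair W hW W' hW'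
    _ = #A * Nat.card V * (Nat.card F + #A) := by
        simp +contextual only [← mul_sum, sum_add_distrib, sum_ite_eq, ↓reduceIte, sum_const,
          smul_eq_mul, mul_one]
        ring

-- Cauchy–Schwarz for the number of hyperplanes through a vector.
open scoped Classical in
lemma card_mul_natCard_le_card_union_hyperplanes (hA : ∀ W ∈ A, IsCoatom W) :
    #A * Nat.card V ≤ #{c : V | ∃ W ∈ A, c ∈ W} * (Nat.card F + #A) := by
  obtain rfl | hne := A.eq_empty_or_nonempty
  · simp
  set X : V → ℕ := fun c => #{W ∈ A | c ∈ W}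
  set G : Finset V := {c | ∃ W ∈ A, c ∈ W}
  have hX (c) (hc : c ∉ G) : X c = 0 := by
    simpa [G, X, filter_eq_empty_iff] using hc
  have hsum : ∑ c ∈ G, X c = ∑ c, X c :=
    sum_subset (subset_univ G) fun c _ hc => hX c hc
  have hsum_sq : ∑ c ∈ G, X c ^ 2 = ∑ c, X c ^ 2 :=
    sum_subset (subset_univ G) fun c _ hc => by rw [hX c hc, zero_pow two_ne_zero]
  have hpos : 0 < #A * Nat.card V := Nat.mul_pos hne.card_pos Nat.card_pos
  refine le_of_mul_le_mul_left ?_ hpos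
  calc #A * Nat.card V * (#A * Nat.card V)
      = Nat.card F ^ 2 * (∑ c ∈ G, X c) ^ 2 := by
        rw [hsum, ← mul_pow, natCard_mul_sum_card_hyperplanes hA, sq]
    _ ≤ Nat.card F ^ 2 * (#G * ∑ c ∈ G, X c ^ 2) := by
        gcongr
        exact_mod_cast sq_sum_le_card_mul_sum_sq
    _ = #G * (Nat.card F ^ 2 * ∑ c, X c ^ 2) := by rw [hsum_sq]; ring
    _ ≤ #G * (#A * Nat.card V * (Nat.card F + #A)) :=
        Nat.mul_le_mul_left _ (natCard_sq_mul_sum_card_hyperplanes_sq_le hA)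
    _ = #A * Nat.card V * (#G * (Nat.card F + #A)) := by ring

end Counting

variable {v : ι → V} {s t : Finset ι}

variable (F) in
/-- The family `v` is in general linear position on `s`: any `dim V` of its members with indices
in `s` are linearly independent. -/
def LinearGeneralPositionOn (v : ι → V) (s : Finset ι) : Prop :=
  ∀ t ⊆ s, #t ≤ finrank F V → LinearIndepOn F v (t : Set ι)

namespace LinearGeneralPositionOn

lemma finrank_span (hv : LinearGeneralPositionOn F v s) (hts : t ⊆ s) (ht : #t ≤ finrank F V) :
    finrank F (Submodule.span F (v '' t)) = #t := by
  rw [Set.image_eq_range]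
  exact (finrank_span_eq_card (hv t hts ht)).trans (Fintype.card_coe t)

lemma span_injOn (hv : LinearGeneralPositionOn F v s) {k : ℕ} (hk : k < finrank F V) :
    Set.InjOn (fun t : Finset ι => Submodule.span F (v '' t)) (s.powersetCard k) := by
  classical
  intro t ht t' ht' (heq : Submodule.span F (v '' t) = Submodule.span F (v '' t'))
  rw [mem_coe, mem_powersetCard] at ht ht'
  by_contra hne
  obtain ⟨i, hit', hit⟩ : ∃ i ∈ t', i ∉ t := by
    by_contra! hsub
    exact hne (eq_of_subset_of_card_le hsub (ht.2.trans_le ht'.2.ge)).symm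
  have hins := hv (insert i t) (insert_subset (ht'.1 hit') ht.1)
    (by rw [card_insert_of_notMem hit]; omega)
  rw [coe_insert, linearIndepOn_insert (mod_cast hit), heq] at hins
  exact hins.2 (Submodule.subset_span ⟨i, hit', rfl⟩)

open scoped Classical in
lemma choose_mul_natCard_le [Finite F] [Fintype V] (hv : LinearGeneralPositionOn F v s) {h : ℕ}
    (hV : finrank F V = h + 1) :
    (#s).choose h * Nat.card V ≤
      #{c : V | ∃ t ∈ s.powersetCard h, c ∈ Submodule.span F (v '' t)} *
        (Nat.card F + (#s).choose h) := by
  have hcover := card_mul_natCard_le_card_union_hyperplanes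
    (A := (s.powersetCard h).image fun t : Finset ι => Submodule.span F (v '' t)) fun W hW => by
      obtain ⟨t, ht, rfl⟩ := mem_image.1 hW
      obtain ⟨hts, htc⟩ := mem_powersetCard.1 ht
      rw [isCoatom_iff_finrank_add_one, hv.finrank_span hts (by omega), htc, hV]
  rw [card_image_of_injOn (hv.span_injOn (by omega)), card_powersetCard] at hcover
  simpa only [exists_mem_image] using hcover

lemma exists_linearCombination [FiniteDimensional F V] (hv : LinearGeneralPositionOn F v s)
    (hs : finrank F V ≤ #s) (c : V) :
    ∃ l : ι →₀ F, Finsupp.linearCombination F v l = c ∧ l.support ⊆ s ∧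
      #l.support ≤ finrank F V := by
  obtain ⟨t, hts, ht⟩ := exists_subset_card_eq hs
  have htop : Submodule.span F (v '' t) = ⊤ :=
    Submodule.eq_top_of_finrank_eq ((hv.finrank_span hts ht.le).trans ht)
  obtain ⟨l, hl, rfl⟩ :=
    (Finsupp.mem_span_image_iff_linearCombination F).1 (htop ▸ Submodule.mem_top (x := c))
  exact ⟨l, rfl, Subset.trans (mod_cast hl) hts, ht ▸ card_le_card (mod_cast hl)⟩

lemma exists_sparse_linearCombination [Finite F] [Fintype V]
    (hv : LinearGeneralPositionOn F v s) {h : ℕ} (hV : finrank F V = h + 1) (hs : h + 1 ≤ #s) :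
    ∃ rep : V → ι →₀ F, (∀ c, Finsupp.linearCombination F v (rep c) = c) ∧
      (∀ c, (rep c).support ⊆ s) ∧
      (∑ c, #(rep c).support : ℝ) ≤
        Nat.card V * (h + 1 - (#s).choose h / (Nat.card F + (#s).choose h)) := by
  classical
  set G : Finset V := {c | ∃ t ∈ s.powersetCard h, c ∈ Submodule.span F (v '' t)}
  have hrep (c : V) : ∃ l : ι →₀ F, Finsupp.linearCombination F v l = c ∧ l.support ⊆ s ∧
      #l.support + (if c ∈ G then 1 else 0) ≤ h + 1 := by
    split_ifs with hc
    · obtain ⟨t, ht, hct⟩ := (mem_filter.1 hc).2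
      obtain ⟨hts, htc⟩ := mem_powersetCard.1 ht
      obtain ⟨l, hl, rfl⟩ := (Finsupp.mem_span_image_iff_linearCombination F).1 hct
      have hlt : l.support ⊆ t := mod_cast hl
      exact ⟨l, rfl, hlt.trans hts, Nat.add_le_add_right (htc ▸ card_le_card hlt) 1⟩
    · exact hV ▸ hv.exists_linearCombination (hV.trans_le hs) c
  choose rep hrep_eq hrep_supp hrep_card using hrep
  refine ⟨rep, hrep_eq, hrep_supp, ?_⟩
  have hsum : (∑ c, #(rep c).support : ℝ) + #G ≤ Nat.card V * (h + 1) := by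
    have hle := sum_le_sum (s := univ) fun c _ => hrep_card c
    rw [sum_add_distrib, ← card_filter, filter_mem_eq_inter, univ_inter, sum_const, card_univ,
      ← Nat.card_eq_fintype_card, smul_eq_mul] at hle
    exact_mod_cast hle
  have hcover : (#s).choose h * Nat.card V ≤ #G * (Nat.card F + (#s).choose h) :=
    hv.choose_mul_natCard_le hV
  have hF : (0 : ℝ) < Nat.card F := mod_cast Nat.card_pos
  have hG : Nat.card V * ((#s).choose h / (Nat.card F + (#s).choose h) : ℝ) ≤ #G := by
    rw [← mul_div_assoc, div_le_iff₀ (by positivity), mul_comm]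
    exact_mod_cast hcover
  linarith

end LinearGeneralPositionOn

end Hyperplanes

/-! ### The moment curve -/

section MomentCurve

open Finset Polynomial

variable {F ι : Type*} [Field F]

/-- The point `(1, x, …, x ^ h)` of the moment curve, i.e. a row of a Vandermonde matrix. -/
def momentCurve (h : ℕ) (x : F) : Fin (h + 1) → F := fun j => x ^ (j : ℕ)

-- A linear relation between points of the curve holds for every polynomial of degree at most `h`;
-- evaluate it on a Lagrange basis polynomial.
lemma linearIndepOn_momentCurve {h : ℕ} {x : ι → F} {s : Finset ι} (hx : Set.InjOn x s)
    (hs : #s ≤ h + 1) : LinearIndepOn F (fun i => momentCurve h (x i)) (s : Set ι) := by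
  classical
  rw [linearIndepOn_finset_iff]
  intro g hg i hi
  have hpoly (p : F[X]) (hp : p.natDegree < h + 1) : ∑ k ∈ s, g k * p.eval (x k) = 0 := by
    calc ∑ k ∈ s, g k * p.eval (x k)
        = ∑ j : Fin (h + 1), p.coeff j * (∑ k ∈ s, g k • momentCurve h (x k)) j := by
          simp_rw [eval_eq_sum_range' hp, sum_range, Finset.sum_apply, mul_sum]
          rw [sum_comm]
          exact sum_congr rfl fun j _ => sum_congr rfl fun k _ => by
            simp only [momentCurve, Pi.smul_apply, smul_eq_mul]
            ring
      _ = 0 := by rw [hg]; simp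
  have hdeg : (Lagrange.basis s x i).natDegree < h + 1 := by
    have := card_pos.2 ⟨i, hi⟩
    rw [natDegree_eq_of_degree_eq_some (Lagrange.degree_basis hx hi)]
    omega
  have hlag := hpoly _ hdeg
  rwa [sum_eq_single_of_mem i hi fun k hk hki => by
      rw [Lagrange.eval_basis_of_ne hki.symm hk, mul_zero],
    Lagrange.eval_basis_self hx hi, mul_one] at hlag

lemma linearGeneralPositionOn_momentCurve (h : ℕ) {x : ι → F} {s : Finset ι}
    (hx : Set.InjOn x s) : LinearGeneralPositionOn F (fun i => momentCurve h (x i)) s :=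
  fun _ hts ht => linearIndepOn_momentCurve (hx.mono (mod_cast hts))
    (ht.trans_eq (Module.finrank_fin_fun F))

end MomentCurve

/-! ### Throughput of a random routing scheme -/

lemma ORNPath.shift_injective {N : ℕ} (s : ℤ) :
    Function.Injective fun P : ORNPath N => P.shift s := by
  rintro ⟨⟨a, t⟩, w⟩ ⟨⟨a', t'⟩, w'⟩ h
  simpa [ORNPath.shift] using h

section Throughput

open Finset

variable {N T : ℕ}

lemma edgeFlow_inducedFlow (R : ORNDesign N T) (D : ℤ → Fin N → Fin N → ℝ) (e : Fin N × ℤ) :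
    edgeFlow R.sched (inducedFlow R D) e =
      ∑' t, ∑ a, ∑ b, ENNReal.ofReal (D t a b) * edgeFlow R.sched (R.route a b t) e := by
  simp only [edgeFlow, inducedFlow]
  rw [ENNReal.tsum_comm]
  simp_rw [ENNReal.tsum_mul_left, ENNReal.tsum_prod', tsum_fintype,
    Summable.tsum_finsetSum fun _ _ => ENNReal.summable]

-- Charging the flow from `a` to `b` partly to `a` and partly to `b` is what makes row and column
-- sums of the demand matter, rather than its entries.
lemma guaranteesThroughput_of_edgeFlow_le (R : ORNDesign N T) {r : ℝ}
    (p q : Fin N × ℤ → ℤ → Fin N → ℝ≥0∞)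
    (hflow : ∀ e t a b, edgeFlow R.sched (R.route a b t) e ≤ p e t a + q e t b)
    (hload : ∀ e, ENNReal.ofReal r * ∑' t, (∑ a, p e t a + ∑ b, q e t b) ≤ 1) :
    GuaranteesThroughput R r := by
  rintro D ⟨hD, hrow, hcol⟩ e
  have hrow' (t a) : ∑ b, ENNReal.ofReal (D t a b) ≤ ENNReal.ofReal r := by
    rw [← ENNReal.ofReal_sum_of_nonneg fun b _ => hD t a b]
    exact ENNReal.ofReal_le_ofReal (hrow t a)
  have hcol' (t b) : ∑ a, ENNReal.ofReal (D t a b) ≤ ENNReal.ofReal r := by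
    rw [← ENNReal.ofReal_sum_of_nonneg fun a _ => hD t a b]
    exact ENNReal.ofReal_le_ofReal (hcol t b)
  calc edgeFlow R.sched (inducedFlow R D) e
      ≤ ∑' t, ∑ a, ∑ b, ENNReal.ofReal (D t a b) * (p e t a + q e t b) := by
        rw [edgeFlow_inducedFlow]
        gcongr
        exact hflow _ _ _ _
    _ = ∑' t, (∑ a, (∑ b, ENNReal.ofReal (D t a b)) * p e t a +
          ∑ b, (∑ a, ENNReal.ofReal (D t a b)) * q e t b) := by
        refine tsum_congr fun t => ?_
        simp_rw [mul_add, sum_add_distrib, sum_mul]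
        rw [sum_comm (f := fun a b => ENNReal.ofReal (D t a b) * q e t b)]
    _ ≤ ∑' t, (∑ a, ENNReal.ofReal r * p e t a + ∑ b, ENNReal.ofReal r * q e t b) := by
        gcongr
        exacts [hrow' _ _, hcol' _ _]
    _ = ENNReal.ofReal r * ∑' t, (∑ a, p e t a + ∑ b, q e t b) := by
        simp_rw [← mul_sum, ← mul_add, ENNReal.tsum_mul_left]
    _ ≤ 1 := hload e

variable {Ω : Type*} [Fintype Ω] [Nonempty Ω]

/-- The design that routes along `path a b t ω` for a uniformly random sample `ω`: a path carries
as much flow as its probability of being drawn. -/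
noncomputable def ORNDesign.ofUniform (S : ConnSched N T)
    (path : Fin N → Fin N → ℤ → Ω → ORNPath N)
    (hpath : ∀ a b t ω, (path a b t ω).start = (a, t) ∧ ((path a b t ω).dest S).1 = b)
    (hshift : ∀ a b t ω, path a b (t + T) ω = (path a b t ω).shift T) : ORNDesign N T where
  sched := S
  route a b t := (PMF.uniformOfFintype Ω).map (path a b t)
  route_support a b t P hP := by
    obtain ⟨ω, -, rfl⟩ := (PMF.mem_support_map_iff _ _ _).1 ((PMF.mem_support_iff _ _).2 hP)
    exact hpath a b t ω
  route_unit a b t := PMF.tsum_coe _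
  route_periodic a b t P := by
    classical
    simp only [PMF.map_apply, hshift, (ORNPath.shift_injective _).eq_iff]

open scoped Classical in
lemma edgeFlow_map_uniformOfFintype (S : ConnSched N T) (path : Ω → ORNPath N) (e : Fin N × ℤ) :
    edgeFlow S ((PMF.uniformOfFintype Ω).map path) e =
      #{ω | (path ω).usesEdge S e} / Fintype.card Ω := by
  have := PMF.toOuterMeasure_apply ((PMF.uniformOfFintype Ω).map path) {P | P.usesEdge S e}
  rw [← _root_.tsum_subtype, PMF.toOuterMeasure_map_apply,
    PMF.toOuterMeasure_uniformOfFintype_apply] at this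
  rw [← Fintype.card_subtype]
  exact this.symm

-- `perm` lets the two legs of a path be charged to different, but equally distributed, samples.
open scoped Classical in
lemma ORNDesign.ofUniform_guaranteesThroughput {S : ConnSched N T}
    {path : Fin N → Fin N → ℤ → Ω → ORNPath N} {hpath hshift} {r : ℝ}
    (A B : Fin N × ℤ → ℤ → Finset Ω) (src tgt : Fin N × ℤ → ℤ → Ω → Fin N)
    (perm : Fin N → Fin N → ℤ → Equiv.Perm Ω)
    (hcross : ∀ e a b t ω, (path a b t ω).usesEdge S e →
      ω ∈ A e t ∧ src e t ω = a ∨ perm a b t ω ∈ B e t ∧ tgt e t (perm a b t ω) = b)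
    (hload : ∀ e, ENNReal.ofReal r * ∑' t, ((#(A e t) + #(B e t) : ℕ) : ℝ≥0∞) ≤ Fintype.card Ω) :
    GuaranteesThroughput (ofUniform S path hpath hshift) r := by
  refine guaranteesThroughput_of_edgeFlow_le _
    (fun e t a => #{ω ∈ A e t | src e t ω = a} / Fintype.card Ω)
    (fun e t b => #{ω ∈ B e t | tgt e t ω = b} / Fintype.card Ω) (fun e t a b => ?_) fun e => ?_
  · refine (edgeFlow_map_uniformOfFintype S (path a b t) e).trans_le ?_
    rw [← ENNReal.add_div]
    gcongr
    norm_cast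
    have hB : #{ω | perm a b t ω ∈ B e t ∧ tgt e t (perm a b t ω) = b} =
        #{ω ∈ B e t | tgt e t ω = b} :=
      card_bijective (perm a b t) (perm a b t).bijective (by simp)
    rw [← hB]
    refine (card_le_card fun ω hω => ?_).trans (card_union_le _ _)
    simpa using hcross e a b t ω (mem_filter.1 hω).2
  · simp_rw [ENNReal.div_eq_inv_mul, ← mul_sum, ← mul_add, ENNReal.tsum_mul_left, ← Nat.cast_sum,
      ← card_eq_sum_card_fiberwise (f := src e _) (t := univ) fun _ _ => mem_coe.2 (mem_univ _),
      ← card_eq_sum_card_fiberwise (f := tgt e _) (t := univ) fun _ _ => mem_coe.2 (mem_univ _),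
      ← Nat.cast_add]
    rw [mul_left_comm, ← ENNReal.div_eq_inv_mul]
    exact ENNReal.div_le_of_le_mul ((hload e).trans_eq (one_mul _).symm)

lemma ORNDesign.ofUniform_maxLatencyLE {S : ConnSched N T}
    {path : Fin N → Fin N → ℤ → Ω → ORNPath N} {hpath hshift} {L : ℕ}
    (hL : ∀ a b t ω, (path a b t ω).latency ≤ L) :
    MaxLatencyLE (ofUniform S path hpath hshift) L := by
  intro a b t P hP
  obtain ⟨ω, -, rfl⟩ := (PMF.mem_support_map_iff _ _ _).1 ((PMF.mem_support_iff _ _).2 hP)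
  exact hL a b t ω

end Throughput

/-! ### Translation schedules -/

section Translation

open Finset

variable {N T : ℕ} {V : Type*} [AddCommGroup V]

/-- The schedule that, in slot `τ`, connects the node labelled `x` to the node labelled
`x + hop τ`. -/
def translationSched (E : Fin N ≃ V) {hop : ℤ → V} (hT : 0 < T)
    (hhop : Function.Periodic hop (T : ℤ)) : ConnSched N T where
  Tpos := hT
  perm τ := (E.trans (Equiv.addRight (hop τ))).trans E.symm
  periodic τ := by rw [hhop]

open scoped Classical in
/-- The path of latency `L` from `(a, t)` that takes the physical edge in exactly those slots that
lie in `active`. -/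
noncomputable def timedPath (active : Set ℤ) (a : Fin N) (t : ℤ) (L : ℕ) : ORNPath N :=
  ⟨(a, t), (List.range L).map fun k : ℕ => decide (t + k ∈ active)⟩

open scoped Classical in
/-- The total translation undergone between times `s` and `t` along a path that takes the physical
edges of the slots in `active`. -/
noncomputable def displacement (hop : ℤ → V) (active : Set ℤ) (s t : ℤ) : V :=
  ∑ σ ∈ Ico s t with σ ∈ active, hop σ

lemma displacement_self (hop : ℤ → V) (active : Set ℤ) (t : ℤ) :
    displacement hop active t t = 0 := by
  simp [displacement]

lemma displacement_add (hop : ℤ → V) (active : Set ℤ) {s t u : ℤ} (hst : s ≤ t) (htu : t ≤ u) :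
    displacement hop active s t + displacement hop active t u = displacement hop active s u := by
  classical
  simp only [displacement]
  rw [← sum_union (disjoint_filter_filter (Ico_disjoint_Ico_consecutive s t u)), ← filter_union,
    Ico_union_Ico_eq_Ico hst htu]

lemma displacement_congr (hop : ℤ → V) {active active' : Set ℤ} {s t : ℤ}
    (h : ∀ σ ∈ Ico s t, σ ∈ active ↔ σ ∈ active') :
    displacement hop active s t = displacement hop active' s t := by
  classical
  simp only [displacement, filter_congr h]

open scoped Classical in
lemma displacement_succ (hop : ℤ → V) (active : Set ℤ) {s t : ℤ} (hst : s ≤ t) :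
    displacement hop active s (t + 1) =
      displacement hop active s t + if t ∈ active then hop t else 0 := by
  simp only [displacement, sum_filter]
  rw [← insert_Ico_right_eq_Ico_add_one hst, sum_insert right_notMem_Ico, add_comm]

lemma timedPath_add_right {active active' : Set ℤ} {s : ℤ}
    (h : ∀ σ, σ + s ∈ active' ↔ σ ∈ active) (a : Fin N) (t : ℤ) (L : ℕ) :
    timedPath active' a (t + s) L = (timedPath active a t L).shift s := by
  simp [timedPath, ORNPath.shift, add_right_comm t s, h]

lemma timedPath_latency (active : Set ℤ) (a : Fin N) (t : ℤ) (L : ℕ) :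
    (timedPath active a t L).latency = L := by
  simp [timedPath, ORNPath.latency]

variable (E : Fin N ≃ V) {hop : ℤ → V} (hT : 0 < T) (hhop : Function.Periodic hop (T : ℤ))

lemma timedPath_vertexAt (active : Set ℤ) (a : Fin N) (t : ℤ) {L k : ℕ} (hk : k ≤ L) :
    (timedPath active a t L).vertexAt (translationSched E hT hhop) k =
      (E.symm (E a + displacement hop active t (t + k)), t + k) := by
  simp only [timedPath, ORNPath.vertexAt, ← List.map_take, List.take_range, min_eq_left hk]
  clear hk
  induction k with
  | zero => simp [displacement_self]
  | succ k ih =>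
    rw [List.range_succ, List.map_append, List.foldl_append, ih, Nat.cast_add_one, ← add_assoc,
      displacement_succ hop active (by omega)]
    by_cases hσ : t + k ∈ active <;>
      simp [ORNPath.stepFn, translationSched, hσ, add_assoc]

lemma timedPath_dest (active : Set ℤ) (a : Fin N) (t : ℤ) (L : ℕ) :
    (timedPath active a t L).dest (translationSched E hT hhop) =
      (E.symm (E a + displacement hop active t (t + L)), t + L) := by
  rw [← timedPath_vertexAt E hT hhop active a t le_rfl, ORNPath.vertexAt, ORNPath.dest,
    List.take_of_length_le (timedPath_latency active a t L).le]

lemma timedPath_usesEdge {active : Set ℤ} {a : Fin N} {t : ℤ} {L : ℕ} {e : Fin N × ℤ}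
    (he : (timedPath active a t L).usesEdge (translationSched E hT hhop) e) :
    e.2 ∈ Ico t (t + L) ∧ e.2 ∈ active ∧ E e.1 = E a + displacement hop active t e.2 := by
  obtain ⟨⟨k, hk⟩, hactive, rfl⟩ := he
  have hkL : k < L := hk.trans_eq (timedPath_latency active a t L)
  rw [timedPath_vertexAt E hT hhop active a t hkL.le]
  refine ⟨mem_Ico.2 ⟨by omega, by omega⟩, by simpa [timedPath] using hactive, by simp⟩

end Translation

/-! ### Phase systems -/

/-- The first phase, i.e. block `[x * m, (x + 1) * m)` of `m` slots, that starts no earlier than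
`t`. -/
def startPhase (m : ℕ) (t : ℤ) : ℤ := (t - 1) / m + 1

section StartPhase

variable (m : ℕ) [NeZero m] (t : ℤ)

lemma le_startPhase_mul : t ≤ startPhase m t * m := by
  have := Int.lt_ediv_add_one_mul_self (t - 1) (Nat.cast_pos.2 (NeZero.pos m))
  rw [startPhase]
  omega

lemma startPhase_mul_lt : startPhase m t * m < t + m := by
  have := Int.ediv_mul_le (t - 1) (Nat.cast_ne_zero.2 (NeZero.ne m))
  rw [startPhase, add_one_mul]
  omega

lemma startPhase_add_mul (k : ℤ) : startPhase m (t + k * m) = startPhase m t + k := by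
  rw [startPhase, startPhase, add_sub_right_comm,
    Int.add_mul_ediv_right _ _ (Nat.cast_ne_zero.2 (NeZero.ne m)), add_right_comm]

lemma tsum_startPhase (g : ℤ → ℝ≥0∞) : ∑' t, g (startPhase m t) = m * ∑' x, g x := by
  calc ∑' t, g (startPhase m t)
      = ∑' t : ℤ, g (t / m + 1) := (Equiv.subRight (1 : ℤ)).tsum_eq fun t => g (t / m + 1)
    _ = ∑' p : ℤ × Fin m, g (p.1 + 1) := (Int.divModEquiv m).tsum_eq fun p => g (p.1 + 1)
    _ = m * ∑' x : ℤ, g (x + 1) := by simp [ENNReal.tsum_prod', ENNReal.tsum_mul_left]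
    _ = m * ∑' x, g x := congrArg ((m : ℝ≥0∞) * ·) ((Equiv.addRight (1 : ℤ)).tsum_eq g)

end StartPhase

section PhaseSystem

open Finset

variable {F V : Type*} [Field F] [AddCommGroup V] [Module F V]

variable (F V) in
/-- The data of a schedule in which phase `q` uses one direction `twist ^ q • base` of `V` and, in
its `m` slots, translates by all the nonzero multiples of that direction, in the order given by
the powers of a generator of `Fˣ`. -/
structure PhaseSystem (m : ℕ) where
  gen : Fˣ
  mem_zpowers_gen : ∀ u : Fˣ, u ∈ Subgroup.zpowers gen
  orderOf_gen : orderOf gen = m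
  twist : V ≃ₗ[F] V
  twist_pow : twist ^ m = 1
  base : V

/-- Postpone by `x` phases the linear combination of directions with coefficients `f`. -/
def delay (x : ℤ) (f : ℤ →₀ F) : ℤ →₀ F := f.equivMapDomain (Equiv.addRight x)

lemma delay_apply (x : ℤ) (f : ℤ →₀ F) (q : ℤ) : delay x f q = f (q - x) :=
  congrArg f (sub_eq_add_neg q x).symm

namespace PhaseSystem

section Displacement

variable {m : ℕ} (S : PhaseSystem F V m)

/-- The direction of phase `q`. -/
def dir (q : ℤ) : V := (S.twist ^ q) S.base

/-- The translation in slot `τ`. -/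
def hop (τ : ℤ) : V := (S.gen ^ τ) • S.dir (τ / m)

/-- The slots whose translation equals the term of phase `τ / m` in the linear combination `f` of
directions. -/
def active (f : ℤ → F) : Set ℤ := {τ | f (τ / m) = (S.gen ^ τ : Fˣ)}

lemma mem_active {f : ℤ → F} {τ : ℤ} : τ ∈ S.active f ↔ f (τ / m) = (S.gen ^ τ : Fˣ) := Iff.rfl

lemma gen_zpow_add_mul (τ k : ℤ) : S.gen ^ (τ + k * m) = S.gen ^ τ := by
  rw [zpow_add, mul_comm k, zpow_mul, zpow_natCast, orderOf_dvd_iff_pow_eq_one.1 S.orderOf_gen.dvd,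
    one_zpow, mul_one]

lemma twist_zpow_add (q : ℤ) : S.twist ^ (q + m) = S.twist ^ q := by
  rw [zpow_add, zpow_natCast, S.twist_pow, mul_one]

lemma hop_periodic [NeZero m] : Function.Periodic S.hop ((m * m : ℕ) : ℤ) := by
  intro τ
  rw [Nat.cast_mul, hop, gen_zpow_add_mul, Int.add_mul_ediv_right _ _ (NeZero.ne _), dir,
    twist_zpow_add, hop, dir]

lemma linearCombination_delay (x : ℤ) (f : ℤ →₀ F) :
    Finsupp.linearCombination F S.dir (delay x f) =
      (S.twist ^ x) (Finsupp.linearCombination F S.dir f) := by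
  rw [delay, Finsupp.linearCombination_equivMapDomain, ← LinearEquiv.coe_coe,
    Finsupp.apply_linearCombination]
  congr 2
  ext q
  simp [dir, add_comm q x, zpow_add]

lemma displacement_active [NeZero m] (f : ℤ →₀ F) {s t : ℤ}
    (hf : ∀ q ∈ f.support, s ≤ q * m ∧ (q + 1) * m ≤ t) :
    displacement S.hop (S.active f) s t = Finsupp.linearCombination F S.dir f := by
  classical
  have hm : (0 : ℤ) < m := Nat.cast_pos.2 (NeZero.pos m)
  rw [displacement, Finsupp.linearCombination_apply, Finsupp.sum]
  refine sum_nbij (· / (m : ℤ)) (fun σ hσ => ?_) (fun σ hσ σ' hσ' heq => ?_) (fun q hq => ?_)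
    fun σ hσ => ?_
  · rw [Finsupp.mem_support_iff, (mem_filter.1 hσ).2]
    exact Units.ne_zero _
  · have hpow := Units.ext ((mem_filter.1 hσ).2.symm.trans
      ((congrArg f heq).trans (mem_filter.1 hσ').2))
    rw [zpow_eq_zpow_iff_modEq, S.orderOf_gen] at hpow
    rw [← Int.mul_ediv_add_emod σ m, ← Int.mul_ediv_add_emod σ' m, hpow.eq,
      show σ / m = σ' / m from heq]
  · obtain ⟨k, hk⟩ := S.mem_zpowers_gen (Units.mk0 (f q) (Finsupp.mem_support_iff.1 hq))
    have hmod := Int.emod_nonneg k hm.ne'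
    have hmod' := Int.emod_lt_of_pos k hm
    have hdiv : (q * m + k % m) / m = q := by
      rw [add_comm, Int.add_mul_ediv_right _ _ hm.ne', Int.ediv_eq_zero_of_lt hmod hmod', zero_add]
    have hpow : S.gen ^ (q * m + k % m) = Units.mk0 (f q) (Finsupp.mem_support_iff.1 hq) := by
      rw [add_comm, gen_zpow_add_mul, ← S.gen_zpow_add_mul _ (k / m), Int.emod_add_ediv_mul]
      exact hk
    have hbounds := hf q hq
    refine ⟨q * m + k % m, mem_filter.2 ⟨mem_Ico.2 ⟨by linarith, by linarith⟩, ?_⟩, hdiv⟩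
    rw [mem_active, hdiv, hpow, Units.val_mk0]
  · rw [hop, Units.smul_def, (mem_filter.1 hσ).2]

end Displacement

/-- A choice of coefficients that writes each `c : V` as a linear combination of the directions of
the first `K` phases. -/
structure Rep (S : PhaseSystem F V m) (K : ℕ) where
  coef : V → ℤ →₀ F
  linearCombination_coef : ∀ c, Finsupp.linearCombination F S.dir (coef c) = c
  support_coef : ∀ c, (coef c).support ⊆ Ico 0 (K : ℤ)

variable {m : ℕ} {S : PhaseSystem F V m} {K : ℕ}

namespace Rep

/-- Represent `c` by `u` times the representation of `u⁻¹ • c`. For random `c` and `u`, a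
coefficient takes any two nonzero values equally often. -/
noncomputable def scale (ρ : S.Rep K) (u : Fˣ) : S.Rep K where
  coef c := (u : F) • ρ.coef (u⁻¹ • c)
  linearCombination_coef c := by
    rw [map_smul, ρ.linearCombination_coef, ← Units.smul_def, smul_inv_smul]
  support_coef c := Finsupp.support_smul.trans (ρ.support_coef _)

-- `u⁻¹ • c` determines the scaling factor `u`, hence also `c`.
open scoped Classical in
lemma card_scale_coef_eq_le [Fintype V] [Fintype Fˣ] (ρ : S.Rep K) (i : ℤ) (σ : Fˣ) :
    #{ω : V × Fˣ | (ρ.scale ω.2).coef ω.1 i = σ} ≤ #{c : V | ρ.coef c i ≠ 0} := by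
  refine card_le_card_of_injOn (fun ω => ω.2⁻¹ • ω.1) (fun ω hω => ?_) ?_
  · have hω : (ω.2 : F) * ρ.coef (ω.2⁻¹ • ω.1) i = σ := (mem_filter.1 hω).2
    exact mem_filter.2 ⟨mem_univ _, right_ne_zero_of_mul (hω.trans_ne σ.ne_zero)⟩
  · rintro ⟨c, u⟩ hω ⟨c', u'⟩ hω' (heq : u⁻¹ • c = u'⁻¹ • c')
    have hσ : (u : F) * ρ.coef (u⁻¹ • c) i = σ := (mem_filter.1 hω).2
    have hσ' : (u' : F) * ρ.coef (u'⁻¹ • c') i = σ := (mem_filter.1 hω').2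
    rw [← heq, ← hσ] at hσ'
    have hu : u' = u :=
      Units.ext (mul_right_cancel₀ (right_ne_zero_of_mul (hσ.trans_ne σ.ne_zero)) hσ')
    rw [hu, smul_left_cancel_iff] at heq
    rw [heq, hu]

lemma coef_eq_zero (ρ : S.Rep K) {i : ℤ} (hi : i ∉ Ico 0 (K : ℤ)) (c : V) : ρ.coef c i = 0 :=
  Finsupp.notMem_support_iff.1 fun h => hi (ρ.support_coef c h)

lemma delay_coef_eq_zero (ρ : S.Rep K) {x q : ℤ} (hq : q ∉ Ico x (x + K)) (c : V) :
    delay x (ρ.coef c) q = 0 := by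
  rw [delay_apply]
  refine ρ.coef_eq_zero (fun h => hq ?_) c
  rw [mem_Ico] at h ⊢
  omega

open scoped Classical in
lemma tsum_card_coef_ne_zero [Fintype V] (ρ : S.Rep K) :
    ∑' i, (#{c : V | ρ.coef c i ≠ 0} : ℝ≥0∞) = (∑ c, #(ρ.coef c).support : ℕ) := by
  rw [tsum_eq_sum (s := Ico 0 (K : ℤ)) fun i hi => by simp [ρ.coef_eq_zero hi]]
  have hsupp (c : V) : (ρ.coef c).support = {i ∈ Ico 0 (K : ℤ) | ρ.coef c i ≠ 0} := by
    ext i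
    simpa [and_iff_right_iff_imp] using @ρ.support_coef c i
  simp_rw [hsupp]
  exact_mod_cast sum_card_bipartiteAbove_eq_sum_card_bipartiteBelow fun i c => ρ.coef c i ≠ 0

end Rep

section TwoLegs

variable (ρ : S.Rep K) (x : ℤ) (v : V)

/-- A trip to a random intermediate point `c`, followed by one from there to `v`, both using the
directions of `K` phases: if the first leg uses the coefficients of `c` from phase `x` on, then the
second leg uses those of `secondLeg x v c` from phase `x + K` on. -/
def secondLeg (S : PhaseSystem F V m) (K : ℕ) (x : ℤ) (v : V) : V ≃ V :=
  ((S.twist ^ x).toEquiv.trans (Equiv.subLeft v)).trans (S.twist ^ (x + K)).symm.toEquiv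

/-- The coefficients of both legs of a trip to `v`. -/
noncomputable def twoLegs (c : V) : ℤ →₀ F :=
  delay x (ρ.coef c) + delay (x + K) (ρ.coef (S.secondLeg K x v c))

variable {x v}

lemma linearCombination_twoLegs (c : V) :
    Finsupp.linearCombination F S.dir (twoLegs ρ x v c) = v := by
  simp [twoLegs, secondLeg, linearCombination_delay, ρ.linearCombination_coef]

lemma twoLegs_apply_of_lt {q : ℤ} (hq : q < x + K) (c : V) :
    twoLegs ρ x v c q = delay x (ρ.coef c) q := by
  rw [twoLegs, Finsupp.add_apply,
    ρ.delay_coef_eq_zero fun h => hq.not_ge (mem_Ico.1 h).1, add_zero]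

lemma twoLegs_apply_of_le {q : ℤ} (hq : x + K ≤ q) (c : V) :
    twoLegs ρ x v c q = delay (x + K) (ρ.coef (S.secondLeg K x v c)) q := by
  rw [twoLegs, Finsupp.add_apply,
    ρ.delay_coef_eq_zero fun h => hq.not_gt (mem_Ico.1 h).2, zero_add]

lemma displacement_twoLegs_of_lt [NeZero m] {s t : ℤ} (ht : t / m < x + K) (c : V) :
    displacement S.hop (S.active (twoLegs ρ x v c)) s t =
      displacement S.hop (S.active (delay x (ρ.coef c))) s t :=
  displacement_congr _ fun σ hσ => by
    rw [mem_active, mem_active, twoLegs_apply_of_lt]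
    exact (Int.ediv_le_ediv (Nat.cast_pos.2 (NeZero.pos m)) (mem_Ico.1 hσ).2.le).trans_lt ht

lemma displacement_twoLegs_of_le [NeZero m] {s t : ℤ} (hs : x + K ≤ s / m) (c : V) :
    displacement S.hop (S.active (twoLegs ρ x v c)) s t =
      displacement S.hop (S.active (delay (x + K) (ρ.coef (S.secondLeg K x v c)))) s t :=
  displacement_congr _ fun σ hσ => by
    rw [mem_active, mem_active, twoLegs_apply_of_le]
    exact hs.trans (Int.ediv_le_ediv (Nat.cast_pos.2 (NeZero.pos m)) (mem_Ico.1 hσ).1)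

lemma support_twoLegs (c : V) : (twoLegs ρ x v c).support ⊆ Ico x (x + 2 * K) := by
  intro q hq
  contrapose! hq
  rw [mem_Ico] at hq
  rw [Finsupp.notMem_support_iff, twoLegs, Finsupp.add_apply, ρ.delay_coef_eq_zero,
    ρ.delay_coef_eq_zero, add_zero] <;> rw [mem_Ico] <;> omega

lemma twoLegs_add (c : V) (q : ℤ) :
    twoLegs ρ (x + m) v c (q + m) = twoLegs ρ x v c q := by
  have hleg : S.secondLeg K (x + m) v = S.secondLeg K x v := by
    rw [secondLeg, secondLeg, add_right_comm, twist_zpow_add, twist_zpow_add]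
  simp only [twoLegs, Finsupp.add_apply, delay_apply, hleg, add_right_comm x _ (K : ℤ),
    add_sub_add_right_eq_sub]

end TwoLegs

section Design

variable {N : ℕ} [NeZero m] (E : Fin N ≃ V) (ρ : S.Rep K)

/-- The schedule whose slot `τ` translates the node labels by `S.hop τ`. -/
def sched (S : PhaseSystem F V m) (E : Fin N ≃ V) : ConnSched N (m * m) :=
  translationSched E (Nat.mul_pos (NeZero.pos m) (NeZero.pos m)) S.hop_periodic

namespace Rep

/-- The route from `a` to `b` at time `t` for the sample `ω`, which consists of an intermediate
point and of a scaling factor for the representations of both legs. -/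
noncomputable def path (a b : Fin N) (t : ℤ) (ω : V × Fˣ) : ORNPath N :=
  timedPath (S.active (twoLegs (ρ.scale ω.2) (startPhase m t) (E b - E a) ω.1)) a t
    (m * (2 * K + 1) - 1)

/-- The translation between times `s` and `t` during a leg that starts in phase `x` and is routed
according to the sample `ω`. -/
noncomputable def legDisplacement (x : ℤ) (ω : V × Fˣ) (s t : ℤ) : V :=
  displacement S.hop (S.active (delay x ((ρ.scale ω.2).coef ω.1))) s t

open scoped Classical in
/-- The samples for which a leg that starts in phase `x` uses the physical edges of slot `τ`. -/
noncomputable def crossing [Fintype V] [Fintype Fˣ] (x τ : ℤ) : Finset (V × Fˣ) :=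
  {ω | (ρ.scale ω.2).coef ω.1 (τ / m - x) = (S.gen ^ τ : Fˣ)}

/-- The bijection from the samples of the first leg to those of the second leg. -/
def samplePerm (S : PhaseSystem F V m) (K : ℕ) (E : Fin N ≃ V) (a b : Fin N) (t : ℤ) :
    Equiv.Perm (V × Fˣ) :=
  (S.secondLeg K (startPhase m t) (E b - E a)).prodCongr (Equiv.refl Fˣ)

lemma displacement_twoLegs_startPhase (t : ℤ) (v c : V) :
    displacement S.hop (S.active (twoLegs ρ (startPhase m t) v c)) t
      (t + (m * (2 * K + 1) - 1 : ℕ)) = v := by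
  have hm : 1 ≤ m := NeZero.one_le
  rw [displacement_active, linearCombination_twoLegs]
  intro q hq
  obtain ⟨hxq, hqx⟩ := mem_Ico.1 (support_twoLegs ρ c hq)
  have hstart := le_startPhase_mul m t
  have hstart' := startPhase_mul_lt m t
  rw [Nat.cast_sub (by nlinarith)]
  push_cast
  constructor <;> nlinarith

lemma path_dest (a b : Fin N) (t : ℤ) (ω : V × Fˣ) :
    ((ρ.path E a b t ω).dest (S.sched E)).1 = b := by
  rw [path, sched, timedPath_dest, displacement_twoLegs_startPhase, add_sub_cancel,
    Equiv.symm_apply_apply]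

lemma path_shift (a b : Fin N) (t : ℤ) (ω : V × Fˣ) :
    ρ.path E a b (t + (m * m : ℕ)) ω = (ρ.path E a b t ω).shift (m * m : ℕ) := by
  rw [path, path]
  refine timedPath_add_right (fun σ => ?_) a t _
  rw [mem_active, mem_active, Nat.cast_mul, startPhase_add_mul, gen_zpow_add_mul,
    Int.add_mul_ediv_right _ _ (NeZero.ne _), twoLegs_add]

variable {E ρ} in
-- Before phase `startPhase m t + K` the position on a path is determined by its source and the
-- sample of its first leg, afterwards by its destination and the sample of its second leg.
lemma path_usesEdge [Fintype V] [Fintype Fˣ] {a b : Fin N} {t : ℤ} {ω : V × Fˣ} {e : Fin N × ℤ}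
    (he : (ρ.path E a b t ω).usesEdge (S.sched E) e) :
    ω ∈ ρ.crossing (startPhase m t) e.2 ∧
        E.symm (E e.1 - ρ.legDisplacement (startPhase m t) ω t e.2) = a ∨
      samplePerm S K E a b t ω ∈ ρ.crossing (startPhase m t + K) e.2 ∧
        E.symm (E e.1 + ρ.legDisplacement (startPhase m t + K) (samplePerm S K E a b t ω) e.2
          (t + (m * (2 * K + 1) - 1 : ℕ))) = b := by
  classical
  obtain ⟨hτ, hactive, hpos⟩ := timedPath_usesEdge E _ S.hop_periodic he
  rw [mem_active] at hactive
  obtain hleg | hleg := lt_or_ge (e.2 / m) (startPhase m t + K)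
  · left
    rw [twoLegs_apply_of_lt _ hleg, delay_apply] at hactive
    refine ⟨mem_filter.2 ⟨mem_univ _, hactive⟩, ?_⟩
    rw [hpos, displacement_twoLegs_of_lt _ hleg]
    exact E.symm_apply_eq.2 (add_sub_cancel_right _ _)
  · right
    rw [twoLegs_apply_of_le _ hleg, delay_apply] at hactive
    refine ⟨mem_filter.2 ⟨mem_univ _, hactive⟩, E.symm_apply_eq.2 ?_⟩
    have hrest := displacement_add S.hop
      (S.active (twoLegs (ρ.scale ω.2) (startPhase m t) (E b - E a) ω.1))
      (mem_Ico.1 hτ).1 (mem_Ico.1 hτ).2.le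
    rw [displacement_twoLegs_startPhase, displacement_twoLegs_of_le _ hleg] at hrest
    rw [hpos, add_assoc]
    exact (congrArg (E a + ·) hrest).trans (add_sub_cancel _ _)

variable [Fintype V] [Fintype Fˣ]

/-- Valiant load balancing: route every unit of flow through a uniformly random intermediate
point. -/
noncomputable def design : ORNDesign N (m * m) :=
  ORNDesign.ofUniform (S.sched E) (ρ.path E)
    (fun a b t ω => ⟨rfl, ρ.path_dest E a b t ω⟩) (ρ.path_shift E)

lemma design_maxLatencyLE : MaxLatencyLE (ρ.design E) (m * (2 * K + 1) - 1) :=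
  ORNDesign.ofUniform_maxLatencyLE fun _ _ _ _ => (timedPath_latency _ _ _ _).le

lemma tsum_card_crossing_le (k τ : ℤ) :
    ∑' t, (#(ρ.crossing (startPhase m t + k) τ) : ℝ≥0∞) ≤
      m * (∑ c, #(ρ.coef c).support : ℕ) := by
  classical
  calc ∑' t, (#(ρ.crossing (startPhase m t + k) τ) : ℝ≥0∞)
      ≤ ∑' t, (#{c : V | ρ.coef c (τ / m - (startPhase m t + k)) ≠ 0} : ℝ≥0∞) := by
        gcongr with t
        exact card_scale_coef_eq_le ρ _ _
    _ = m * ∑' x, (#{c : V | ρ.coef c (τ / m - (x + k)) ≠ 0} : ℝ≥0∞) :=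
        tsum_startPhase m fun x => (#{c : V | ρ.coef c (τ / m - (x + k)) ≠ 0} : ℝ≥0∞)
    _ = m * ∑' i, (#{c : V | ρ.coef c i ≠ 0} : ℝ≥0∞) :=
        congrArg ((m : ℝ≥0∞) * ·) <| ((Equiv.addRight k).trans (Equiv.subLeft (τ / m))).tsum_eq
          fun i => (#{c : V | ρ.coef c i ≠ 0} : ℝ≥0∞)
    _ = m * (∑ c, #(ρ.coef c).support : ℕ) := by rw [tsum_card_coef_ne_zero]

lemma design_guaranteesThroughput {r : ℝ}
    (hr : r * (2 * ∑ c, #(ρ.coef c).support) ≤ Fintype.card V) :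
    GuaranteesThroughput (ρ.design E) r := by
  refine ORNDesign.ofUniform_guaranteesThroughput
    (fun e t => ρ.crossing (startPhase m t) e.2) (fun e t => ρ.crossing (startPhase m t + K) e.2)
    (fun e t ω => E.symm (E e.1 - ρ.legDisplacement (startPhase m t) ω t e.2))
    (fun e t ω => E.symm (E e.1 + ρ.legDisplacement (startPhase m t + K) ω e.2
      (t + (m * (2 * K + 1) - 1 : ℕ))))
    (samplePerm S K E) (fun e a b t ω he => path_usesEdge he) fun e => ?_
  have hm : Fintype.card Fˣ = m := by
    rw [← S.orderOf_gen, orderOf_eq_card_of_forall_mem_zpowers S.mem_zpowers_gen,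
      Nat.card_eq_fintype_card]
  set W := ∑ c, #(ρ.coef c).support
  have hW : ENNReal.ofReal r * (2 * W : ℕ) ≤ Fintype.card V := by
    rw [← ENNReal.ofReal_natCast, ← ENNReal.ofReal_mul' (Nat.cast_nonneg _),
      ← ENNReal.ofReal_natCast]
    exact ENNReal.ofReal_le_ofReal (by exact_mod_cast hr)
  calc ENNReal.ofReal r * ∑' t, ((#(ρ.crossing (startPhase m t) e.2) +
        #(ρ.crossing (startPhase m t + K) e.2) : ℕ) : ℝ≥0∞)
      ≤ ENNReal.ofReal r * (m * W + m * W) := by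
        simp_rw [Nat.cast_add, ENNReal.tsum_add]
        gcongr
        · simpa only [add_zero] using ρ.tsum_card_crossing_le 0 e.2
        · exact ρ.tsum_card_crossing_le K e.2
    _ = ENNReal.ofReal r * (2 * W : ℕ) * m := by
        push_cast
        ring
    _ ≤ Fintype.card (V × Fˣ) := by
        rw [Fintype.card_prod, hm, Nat.cast_mul (Fintype.card V)]
        gcongr

end Rep

end Design

end PhaseSystem

end PhaseSystem

/-! ### The Vandermonde bases scheme -/

section Vandermonde

open Finset

variable {F : Type*} [Field F]

/-- The group of diagonal automorphisms of `ι → F`. -/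
def diagAut (ι : Type*) : (ι → Fˣ) →* ((ι → F) ≃ₗ[F] (ι → F)) :=
  MonoidHom.mk' (fun w => LinearEquiv.piCongrRight fun j => LinearEquiv.smulOfUnit (w j))
    fun w w' => LinearEquiv.ext fun x => funext fun j => mul_smul (w j) (w' j) (x j)

/-- The phase system whose direction in phase `q` is the Vandermonde vector of `u ^ q`, where `u`
generates `Fˣ`. -/
def vandermondeSystem (h : ℕ) (u : Fˣ) (hu : ∀ v, v ∈ Subgroup.zpowers u) :
    PhaseSystem F (Fin (h + 1) → F) (orderOf u) where
  gen := u
  mem_zpowers_gen := hu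
  orderOf_gen := rfl
  twist := diagAut _ fun j => u ^ (j : ℕ)
  twist_pow := by
    rw [← map_pow]
    convert map_one (diagAut (Fin (h + 1))) using 2
    ext j
    rw [Pi.pow_apply, pow_right_comm, pow_orderOf_eq_one, one_pow, Pi.one_apply]
  base := 1

lemma vandermondeSystem_dir (h : ℕ) (u : Fˣ) (hu : ∀ v, v ∈ Subgroup.zpowers u) (q : ℤ) :
    (vandermondeSystem h u hu).dir q = momentCurve h ((u ^ q : Fˣ) : F) := by
  ext j
  rw [PhaseSystem.dir, vandermondeSystem, ← map_zpow]
  refine (mul_one _).trans ?_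
  rw [Pi.pow_apply, momentCurve, ← Units.val_pow_eq_pow_val, ← zpow_natCast, ← zpow_natCast,
    zpow_comm]

lemma linearGeneralPositionOn_vandermondeSystem_dir (h : ℕ) (u : Fˣ)
    (hu : ∀ v, v ∈ Subgroup.zpowers u) {K : ℕ} (hK : K ≤ orderOf u) :
    LinearGeneralPositionOn F (vandermondeSystem h u hu).dir (Ico 0 (K : ℤ)) := by
  rw [funext (vandermondeSystem_dir h u hu)]
  refine linearGeneralPositionOn_momentCurve h fun q hq q' hq' heq => ?_
  rw [coe_Ico, Set.mem_Ico] at hq hq'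
  have hmod := zpow_eq_zpow_iff_modEq.1 (Units.ext heq)
  rwa [Int.ModEq, Int.emod_eq_of_lt hq.1 (by omega), Int.emod_eq_of_lt hq'.1 (by omega)] at hmod

lemma exists_rep_vandermondeSystem [Fintype F] (h : ℕ) (u : Fˣ) (hu : ∀ v, v ∈ Subgroup.zpowers u)
    {K : ℕ} (hhK : h + 1 ≤ K) (hK : K ≤ orderOf u) :
    ∃ ρ : (vandermondeSystem h u hu).Rep K, (∑ c, #(ρ.coef c).support : ℝ) ≤
      Nat.card (Fin (h + 1) → F) * (h + 1 - K.choose h / (Nat.card F + K.choose h)) := by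
  obtain ⟨rep, hrep, hsupp, hsum⟩ :=
    (linearGeneralPositionOn_vandermondeSystem_dir h u hu hK).exists_sparse_linearCombination
      (Module.finrank_fin_fun F) (by simpa using hhK)
  exact ⟨⟨rep, hrep, hsupp⟩, by simpa using hsum⟩

theorem exists_design_of_finite_field (F : Type*) [Field F] [Finite F] {h K : ℕ} (hhK : h + 1 ≤ K)
    (hK : K < Nat.card F) {ε : ℝ} (hε : ε ≤ K.choose h / (Nat.card F + K.choose h)) :
    ∃ (T : ℕ) (R : ORNDesign (Nat.card F ^ (h + 1)) T),
      GuaranteesThroughput R (1 / (2 * ((h : ℝ) + 1 - ε))) ∧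
      MaxLatencyLE R ((Nat.card F - 1) * (2 * K + 1) - 1) := by
  have := Fintype.ofFinite F
  have := Fintype.ofFinite Fˣ
  obtain ⟨u, hu⟩ := IsCyclic.exists_generator (α := Fˣ)
  have hcard : orderOf u = Nat.card F - 1 := by
    rw [orderOf_eq_card_of_forall_mem_zpowers hu, Nat.card_units]
  have : NeZero (orderOf u) := ⟨(orderOf_pos u).ne'⟩
  obtain ⟨ρ, hρ⟩ := exists_rep_vandermondeSystem h u hu hhK (by omega)
  have hV : Nat.card (Fin (h + 1) → F) = Nat.card F ^ (h + 1) := by simp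
  let E : Fin (Nat.card F ^ (h + 1)) ≃ (Fin (h + 1) → F) := (Finite.equivFinOfCardEq hV).symm
  refine ⟨_, ρ.design E, ρ.design_guaranteesThroughput E ?_, hcard ▸ ρ.design_maxLatencyLE E⟩
  have hC : (K.choose h : ℝ) / (Nat.card F + K.choose h) < 1 := by
    have : (0 : ℝ) < Nat.card F := Nat.cast_pos.2 Nat.card_pos
    rw [div_lt_one (by positivity)]
    linarith
  have hpos : (0 : ℝ) < h + 1 - ε := by linarith [h.cast_nonneg (α := ℝ)]
  rw [one_div_mul_eq_div, div_le_iff₀ (by positivity), ← Nat.card_eq_fintype_card]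
  push_cast
  linarith [hρ.trans (mul_le_mul_of_nonneg_left (sub_le_sub_left hε _) (Nat.cast_nonneg _))]

theorem exists_design_of_isPrimePow {h n K : ℕ} (hn : IsPrimePow n) (hhK : h + 1 ≤ K) (hK : K < n)
    {ε : ℝ} (hε : ε ≤ K.choose h / (n + K.choose h)) :
    ∃ (T : ℕ) (R : ORNDesign (n ^ (h + 1)) T),
      GuaranteesThroughput R (1 / (2 * ((h : ℝ) + 1 - ε))) ∧
      MaxLatencyLE R ((n - 1) * (2 * K + 1) - 1) := by
  obtain ⟨p, k, hp, hk, rfl⟩ := (isPrimePow_nat_iff n).1 hn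
  have : Fact p.Prime := ⟨hp⟩
  rw [← GaloisField.card p k hk.ne'] at hK hε ⊢
  exact exists_design_of_finite_field (GaloisField p k) hhK hK hε

theorem vbs_exists_general (h n Q : ℕ) (δ ε : ℝ) (hδ : δ ≤ 3) (hε : ε = δ / 4)
    (hn : IsPrimePow n) (hQ : δ * n ≤ ((h + 1 + Q).choose h : ℝ)) (hnQ : h + 1 + Q < n) :
    ∃ (T : ℕ) (R : ORNDesign (n ^ (h + 1)) T),
      GuaranteesThroughput R (1 / (2 * ((h : ℝ) + 1 - ε))) ∧
      MaxLatencyLE R ((n - 1) * (3 + 2 * h + 2 * Q) - 1) := by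
  rw [show 3 + 2 * h + 2 * Q = 2 * (h + 1 + Q) + 1 by ring]
  refine exists_design_of_isPrimePow hn (by omega) hnQ ?_
  have hn0 : (0 : ℝ) < n := mod_cast hn.pos
  rw [hε, div_le_div_iff₀ (by norm_num) (by positivity)]
  nlinarith [mul_le_mul_of_nonneg_right hδ ((h + 1 + Q).choose h).cast_nonneg]

end Vandermonde

/-- **VBS.** Let `h ≥ 1`, let `0 < δ ≤ 1/(4(h+1)(1+1/(2h))²)`, and set
`ε = δ/4`. Let `n` be prime, `N = n^{h+1}`, `Q₀` the least integer with
`binom(Q₀,h) ≥ δn`, and `Q = max(2h²−h, Q₀)`; assume `n > h + 1 + Q`. Then there exists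
an ORN design on `N` nodes that guarantees throughput `1/(2(h+1−ε))` and has maximum
latency at most `(n−1)(3+2h+2Q) − 1`. -/
theorem vbs_exists (h : ℕ) (hh : 1 ≤ h) (δ ε : ℝ) (hδ0 : 0 < δ)
    (hδ1 : δ ≤ 1 / (4 * ((h : ℝ) + 1) * (1 + 1 / (2 * h)) ^ 2))
    (hε : ε = δ / 4)
    (n : ℕ) (hn : n.Prime)
    (Q₀ Q : ℕ) (hQ₀ : IsLeast {q : ℕ | δ * n ≤ (q.choose h : ℝ)} Q₀)
    (hQ : Q = max (2 * h ^ 2 - h) Q₀)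
    (hnQ : h + 1 + Q < n) :
    ∃ (T : ℕ) (R : ORNDesign (n ^ (h + 1)) T),
      GuaranteesThroughput R (1 / (2 * ((h : ℝ) + 1 - ε))) ∧
      MaxLatencyLE R ((n - 1) * (3 + 2 * h + 2 * Q) - 1) := by
  have hden : 1 ≤ 4 * ((h : ℝ) + 1) * (1 + 1 / (2 * h)) ^ 2 :=
    one_le_mul_of_one_le_of_one_le (by linarith [h.cast_nonneg (α := ℝ)]) (one_le_pow₀ (by simp))
  have hδ : δ ≤ 1 := hδ1.trans (div_le_one_of_le₀ hden (by positivity))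
  exact vbs_exists_general h n Q δ ε (hδ.trans (by norm_num)) hε hn.isPrimePow
    (hQ₀.1.trans (mod_cast Nat.choose_mono h (by omega))) hnQ
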